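/- arXiv:2407.01827 — 4 statements merged into one kernel-verified Lean document; each statement's English description precedes it below -/
import Mathlib

section
/- Let a, b, c be real numbers with 0 ≤ c ≤ 1, and suppose D₃ ≥ 0 (so that P(x) = x³ + a x² + b x + c has three real roots counted with multiplicity). Then P has exactly 2 roots, counted with multiplicity, in the closed interval [−1, 1] if and only if (A < 0 and B ≤ 0) or (A ≥ 0 and B > 0) or (A > A_T and B = 0) or (A = 0 and B < B_T). -/
open Polynomial

def CondTwo (p q r : ℝ) : Prop :=
  ((1-p)*(1-q)*(1-r) < 0 ∧ (1+p)*(1+q)*(1+r) ≥ 0) ∨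
  ((1-p)*(1-q)*(1-r) ≥ 0 ∧ (1+p)*(1+q)*(1+r) < 0) ∨
  ((1-p)*(1-q)*(1-r) > 4*(1-p*q*r) ∧ (1+p)*(1+q)*(1+r) = 0) ∨
  ((1-p)*(1-q)*(1-r) = 0 ∧ (1+p)*(1+q)*(1+r) > 4*(1+p*q*r))

lemma not_cond_of (p q r : ℝ) (hA : 0 < (1-p)*(1-q)*(1-r)) (hB : 0 < (1+p)*(1+q)*(1+r)) :
    ¬ CondTwo p q r := by
  rintro (h | h | h | h) <;> linarith [h.1, h.2]

lemma not_cond_of' (p q r : ℝ) (hA : (1-p)*(1-q)*(1-r) < 0) (hB : (1+p)*(1+q)*(1+r) < 0) :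
    ¬ CondTwo p q r := by
  rintro (h | h | h | h) <;> linarith [h.1, h.2]

lemma sorted_case (p q r : ℝ) (hpq : p ≤ q) (hqr : q ≤ r) (h0 : p*q*r ≤ 0) (h1 : -1 ≤ p*q*r) :
    Multiset.card (({p, q, r} : Multiset ℝ).filter (fun x => x ∈ Set.Icc (-1 : ℝ) 1)) = 2 ↔
      CondTwo p q r := by
  have e : ∀ x y z : ℝ, ({x, y, z} : Multiset ℝ) = x ::ₘ y ::ₘ z ::ₘ 0 := fun _ _ _ => rfl
  rw [e]
  simp only [Multiset.filter_cons, Multiset.filter_zero, Set.mem_Icc]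
  rcases lt_or_ge p (-1) with hp | hp
  · have np : ¬ (-1 ≤ p ∧ p ≤ 1) := fun h => by linarith [h.1]
    rcases lt_or_ge q (-1) with hq | hq
    · have nq : ¬ (-1 ≤ q ∧ q ≤ 1) := fun h => by linarith [h.1]
      have pq : 1 < p * q := by nlinarith
      have r0 : r ≤ 0 := by
        by_contra h; push Not at h
        nlinarith [mul_pos (by linarith : 0 < p*q) h]
      have r1 : -1 < r := by
        by_contra h; push Not at h
        nlinarith
      have hr : (-1 ≤ r ∧ r ≤ 1) := ⟨by linarith, by linarith⟩
      simp only [np, nq, hr]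
      simp
      apply not_cond_of
      · exact mul_pos (mul_pos (by linarith) (by linarith)) (by linarith)
      · exact mul_pos (mul_pos_of_neg_of_neg (by linarith) (by linarith)) (by linarith)
    · rcases lt_or_ge 1 q with hq1 | hq1
      · exfalso
        have : 1 < q * r := by nlinarith
        nlinarith
      · have iq : (-1 ≤ q ∧ q ≤ 1) := ⟨hq, hq1⟩
        rcases lt_or_ge 1 r with hr | hr
        · have nr : ¬ (-1 ≤ r ∧ r ≤ 1) := fun h => by linarith [h.2]
          simp only [np, nr, iq]
          simp
          have pr : p * r < -1 := by nlinarith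
          have q1 : q ≠ 1 := by rintro rfl; linarith
          have q2 : q ≠ -1 := by rintro rfl; linarith
          have q1 := lt_of_le_of_ne hq1 q1
          have q2 := lt_of_le_of_ne hq q2.symm
          apply not_cond_of'
          · exact mul_neg_of_pos_of_neg (mul_pos (by linarith) (by linarith)) (by linarith)
          · exact mul_neg_of_neg_of_pos (mul_neg_of_neg_of_pos (by linarith) (by linarith)) (by linarith)
        · have ir : (-1 ≤ r ∧ r ≤ 1) := ⟨by linarith, hr⟩
          simp only [np, ir, iq]
          simp
          have hA : 0 ≤ (1-p)*(1-q)*(1-r) :=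
            mul_nonneg (mul_nonneg (by linarith) (by linarith)) (by linarith)
          rcases eq_or_lt_of_le hq with hq2 | hq2
          · subst hq2
            have r1 : -1 < r := by
              by_contra h; push Not at h
              nlinarith
            right; right; left
            refine ⟨?_, by ring⟩
            nlinarith
          · right; left
            exact ⟨hA, mul_neg_of_neg_of_pos (mul_neg_of_neg_of_pos (by linarith) (by linarith)) (by linarith)⟩
  · rcases lt_or_ge 1 p with hp1 | hp1
    · exfalso
      have : 0 < p*q*r := mul_pos (mul_pos (by linarith) (by linarith)) (by linarith)
      linarith
    · have ip : (-1 ≤ p ∧ p ≤ 1) := ⟨hp, hp1⟩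
      rcases lt_or_ge 1 q with hq | hq
      · have nq : ¬ (-1 ≤ q ∧ q ≤ 1) := fun h => by linarith [h.2]
        have nr : ¬ (-1 ≤ r ∧ r ≤ 1) := fun h => by linarith [h.2]
        simp only [ip, nq, nr]
        simp
        have qr : 1 < q * r := by nlinarith
        have p0 : p ≤ 0 := by
          by_contra h; push Not at h
          nlinarith [mul_pos h (by linarith : 0 < q*r)]
        have p1 : -1 < p := by
          by_contra h; push Not at h
          nlinarith
        apply not_cond_of
        · exact mul_pos_of_neg_of_neg (mul_neg_of_pos_of_neg (by linarith) (by linarith)) (by linarith)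
        · exact mul_pos (mul_pos (by linarith) (by linarith)) (by linarith)
      · have iq : (-1 ≤ q ∧ q ≤ 1) := ⟨by linarith, hq⟩
        have hq' := iq.1
        rcases lt_or_ge 1 r with hr | hr
        · have nr : ¬ (-1 ≤ r ∧ r ≤ 1) := fun h => by linarith [h.2]
          simp only [ip, iq, nr]
          simp
          rcases eq_or_lt_of_le hq with hq2 | hq2
          · subst hq2
            have p1 : p < 1 := by
              by_contra h; push Not at h
              nlinarith
            right; right; right
            refine ⟨by ring, ?_⟩
            nlinarith
          · left
            refine ⟨mul_neg_of_pos_of_neg (mul_pos (by linarith) (by linarith)) (by linarith), ?_⟩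
            exact mul_nonneg (mul_nonneg (by linarith) (by linarith)) (by linarith)
        · have ir : (-1 ≤ r ∧ r ≤ 1) := ⟨by linarith, hr⟩
          simp only [ip, iq, ir]
          simp
          have hA : 0 ≤ (1-p)*(1-q)*(1-r) :=
            mul_nonneg (mul_nonneg (by linarith) (by linarith)) (by linarith)
          have hB : 0 ≤ (1+p)*(1+q)*(1+r) :=
            mul_nonneg (mul_nonneg (by linarith) (by linarith)) (by linarith)
          rintro (h | h | h | h)
          · linarith [h.1]
          · linarith [h.2]
          · obtain ⟨h, h'⟩ := h
            have : p = -1 := by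
              by_contra hne
              have := lt_of_le_of_ne hp (Ne.symm hne)
              have : 0 < (1+p)*(1+q)*(1+r) :=
                mul_pos (mul_pos (by linarith) (by linarith)) (by linarith)
              linarith
            subst this
            nlinarith [mul_nonneg (by linarith : 0 ≤ 1+q) (by linarith : 0 ≤ 1+r)]
          · obtain ⟨h', h⟩ := h
            have : r = 1 := by
              by_contra hne
              have := lt_of_le_of_ne hr hne
              have : 0 < (1-p)*(1-q)*(1-r) :=
                mul_pos (mul_pos (by linarith) (by linarith)) (by linarith)
              linarith
            subst this
            nlinarith [mul_nonneg (by linarith : 0 ≤ 1-p) (by linarith : 0 ≤ 1-q)]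

lemma cond_swap12 (p q r : ℝ) : CondTwo p q r ↔ CondTwo q p r := by
  unfold CondTwo
  rw [mul_comm (1-p) (1-q), mul_comm (1+p) (1+q), mul_comm p q]

lemma cond_swap23 (p q r : ℝ) : CondTwo p q r ↔ CondTwo p r q := by
  unfold CondTwo
  rw [mul_right_comm (1-p) (1-q), mul_right_comm (1+p) (1+q), mul_right_comm p q]

def GoodTwo (p q r : ℝ) : Prop := p*q*r ≤ 0 → -1 ≤ p*q*r →
    (Multiset.card (({p, q, r} : Multiset ℝ).filter (fun x => x ∈ Set.Icc (-1 : ℝ) 1)) = 2 ↔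
      CondTwo p q r)

lemma good_swap12 (p q r : ℝ) (h : GoodTwo p q r) : GoodTwo q p r := by
  unfold GoodTwo at *
  rw [cond_swap12 q p, mul_comm q p]
  have : ({q, p, r} : Multiset ℝ) = {p, q, r} := Multiset.cons_swap _ _ _
  rw [this]; exact h

lemma good_swap23 (p q r : ℝ) (h : GoodTwo p q r) : GoodTwo p r q := by
  unfold GoodTwo at *
  rw [cond_swap23 p r, mul_right_comm p r]
  have : ({p, r, q} : Multiset ℝ) = {p, q, r} := congrArg (p ::ₘ ·) (Multiset.cons_swap r q 0)
  rw [this]; exact h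

lemma good_all (p q r : ℝ) : GoodTwo p q r := by
  have S : ∀ p q r : ℝ, p ≤ q → q ≤ r → GoodTwo p q r :=
    fun p q r h1 h2 h3 h4 => sorted_case p q r h1 h2 h3 h4
  have T : ∀ p q r : ℝ, p ≤ q → GoodTwo p q r := by
    intro p q r h
    rcases le_total q r with h1 | h1
    · exact S _ _ _ h h1
    · apply good_swap23
      rcases le_total p r with h2 | h2
      · exact S _ _ _ h2 h1
      · exact good_swap12 _ _ _ (S _ _ _ h2 h)
  rcases le_total p q with h | h
  · exact T _ _ _ h
  · exact good_swap12 _ _ _ (T _ _ _ h)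

lemma exists_root (a b c : ℝ) : ∃ x : ℝ, x^3 + a*x^2 + b*x + c = 0 := by
  set M := 1 + |a| + |b| + |c| with hM
  have ha := abs_nonneg a
  have hb := abs_nonneg b
  have hc := abs_nonneg c
  have hM1 : 1 ≤ M := by linarith
  have hM2 : M ≤ M^2 := by nlinarith
  have a1 := neg_abs_le a
  have a2 := le_abs_self a
  have b1 := neg_abs_le b
  have b2 := le_abs_self b
  have c1 := neg_abs_le c
  have c2 := le_abs_self c
  have k1 : |b| * M ≤ |b| * M^2 := mul_le_mul_of_nonneg_left hM2 hb
  have k2 : |c| ≤ |c| * M^2 := by nlinarith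
  have k3 : M^3 = M^2 + |a| * M^2 + |b| * M^2 + |c| * M^2 := by
    linear_combination M^2 * hM
  have k4 : -(|a| * M^2) ≤ a*M^2 := by nlinarith [sq_nonneg M]
  have k5 : a*M^2 ≤ |a| * M^2 := by nlinarith [sq_nonneg M]
  have k6 : -(|b| * M) ≤ b*M := by nlinarith
  have k7 : b*M ≤ |b| * M := by nlinarith
  have hcont : ContinuousOn (fun x : ℝ => x^3 + a*x^2 + b*x + c) (Set.Icc (-M) M) := by fun_prop
  have := intermediate_value_Icc (by linarith : -M ≤ M) hcont
  obtain ⟨x, -, hx⟩ := this (show (0:ℝ) ∈ _ from ⟨by nlinarith, by nlinarith⟩)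
  exact ⟨x, hx⟩

lemma exists_three (a b c : ℝ)
    (hD : -27*c^2 + (18*a*b - 4*a^3)*c + a^2*b^2 - 4*b^3 ≥ 0) :
    ∃ p q r : ℝ, a = -(p+q+r) ∧ b = p*q+q*r+p*r ∧ c = -(p*q*r) := by
  obtain ⟨r, hr⟩ := exists_root a b c
  obtain ⟨u, hu⟩ : ∃ u, u = a + r := ⟨_, rfl⟩
  obtain ⟨v, hv⟩ : ∃ v, v = b + r*u := ⟨_, rfl⟩
  have ea : a = u - r := by linarith
  have eb : b = v - r*u := by linarith
  have ec : c = -(r*v) := by rw [hv, hu]; linear_combination hr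
  have hd : 0 ≤ u^2 - 4*v := by
    by_contra h
    push Not at h
    have e : -27*c^2 + (18*a*b - 4*a^3)*c + a^2*b^2 - 4*b^3 = (u^2-4*v) * (r^2+u*r+v)^2 := by
      rw [ea, eb, ec]; ring
    have pos : 0 < r^2+u*r+v := by nlinarith [sq_nonneg (2*r+u)]
    have := mul_neg_of_neg_of_pos h (pow_pos pos 2)
    linarith
  have hs := Real.mul_self_sqrt hd
  refine ⟨(-u - √(u^2-4*v))/2, (-u + √(u^2-4*v))/2, r, ?_, ?_, ?_⟩
  · rw [ea]; ring
  · rw [eb]; linear_combination hs/4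
  · rw [ec]; linear_combination -r*hs/4

/-- For `0 ≤ c ≤ 1` and `D₃ ≥ 0`, the cubic `x³ + a x² + b x + c` has exactly 2 roots
(with multiplicity) in `[-1, 1]` iff the stated sign conditions on
`A = a+b+c+1`, `B = a-b+c-1`, `A_T = 4(c+1)`, `B_T = 4(c-1)` hold. -/
theorem cubic_two_roots_in_Icc_of_c_between_zero_one (a b c : ℝ)
    (hc0 : 0 ≤ c) (hc1 : c ≤ 1)
    (hD : -27*c^2 + (18*a*b - 4*a^3)*c + a^2*b^2 - 4*b^3 ≥ 0) :
    Multiset.card (((X^3 + C a * X^2 + C b * X + C c : ℝ[X]).roots).filter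
        (fun x => x ∈ Set.Icc (-1 : ℝ) 1)) = 2 ↔
      ((a+b+c+1 < 0 ∧ a-b+c-1 ≤ 0) ∨
       (a+b+c+1 ≥ 0 ∧ a-b+c-1 > 0) ∨
       (a+b+c+1 > 4*(c+1) ∧ a-b+c-1 = 0) ∨
       (a+b+c+1 = 0 ∧ a-b+c-1 < 4*(c-1))) := by
  obtain ⟨p, q, r, ea, eb, ec⟩ := exists_three a b c hD
  have hP : (X^3 + C a * X^2 + C b * X + C c : ℝ[X]) =
      (({p, q, r} : Multiset ℝ).map (fun x => X - C x)).prod := by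
    have : (({p, q, r} : Multiset ℝ).map (fun x => X - C x)).prod =
        (X - C p) * ((X - C q) * (X - C r)) := by simp
    rw [this, ea, eb, ec]
    simp only [map_neg, map_add, map_mul]
    ring
  rw [hP, Polynomial.roots_multiset_prod_X_sub_C]
  rw [good_all p q r (by linarith) (by linarith)]
  have e1 : (1-p)*(1-q)*(1-r) = a+b+c+1 := by rw [ea, eb, ec]; ring
  have e2 : (1+p)*(1+q)*(1+r) = -(a-b+c-1) := by rw [ea, eb, ec]; ring
  have e3 : p*q*r = -c := by rw [ec]; ring
  unfold CondTwo
  rw [e1, e2, e3]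
  refine or_congr (and_congr Iff.rfl ?_) (or_congr (and_congr Iff.rfl ?_)
    (or_congr (and_congr ?_ ?_) (and_congr Iff.rfl ?_)))
  all_goals constructor <;> intro h <;> linarith
end

section
/- Let a, b, c be real numbers with c > 0, suppose P(1) = 0 (i.e. A = 0) and D₃ = 0. Then P(x) = (x − 1)²(x + c), i.e. a = c − 2 and b = 1 − 2c, and consequently B = B_T = 4(c − 1). In particular, for c > 0 the plane A = 0 meets the discriminant surface D₃ = 0 only along this tangency line. -/
open Polynomial

/-- For `c > 0`, if `P(1) = 0` (i.e. `A = 0`) and `D₃ = 0`, then `P = (x-1)²(x+c)`,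
i.e. `a = c - 2` and `b = 1 - 2c`, and consequently `B = B_T = 4(c-1)`. -/
theorem A_eq_zero_and_D3_eq_zero_tangency (a b c : ℝ) (hc : 0 < c)
    (hA : a + b + c + 1 = 0)
    (hD : -27*c^2 + (18*a*b - 4*a^3)*c + a^2*b^2 - 4*b^3 = 0) :
    (X^3 + C a * X^2 + C b * X + C c : ℝ[X]) = (X - 1)^2 * (X + C c) ∧
      a = c - 2 ∧ b = 1 - 2*c ∧ a - b + c - 1 = 4*(c-1) := by
  have hb : b = -1 - c - a := by linarith
  subst hb
  have h : ((a+1)^2 + 4*c) * (a + 2 - c)^2 = 0 := by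
    rw [← hD]; ring
  have hpos : (a+1)^2 + 4*c ≠ 0 := by positivity
  have h2 : a + 2 - c = 0 := by
    rcases mul_eq_zero.mp h with h | h
    · exact absurd h hpos
    · exact pow_eq_zero_iff (two_ne_zero) |>.mp h
  have ha : a = c - 2 := by linarith
  subst ha
  refine ⟨?_, rfl, by ring, by ring⟩
  have e0 : (C 2 : ℝ[X]) = 2 := map_ofNat C 2
  have e1 : (C (c - 2) : ℝ[X]) = C c - 2 := by simp [e0]
  have e2 : (C (-1 - c - (c - 2)) : ℝ[X]) = 1 - 2 * C c := by
    rw [show -1 - c - (c - 2) = 1 - 2 * c by ring]; simp [e0]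
  rw [e1, e2]
  ring
end

section
/- Let a, b be real numbers with a² − 4b ≥ 0, and let q(x) = x² + a x + b. Then q has exactly one root, counted with multiplicity, in the closed interval [−1, 1] if and only if (q(1) < 0 and q(−1) ≥ 0) or (q(1) ≥ 0 and q(−1) < 0) or (q(1) > 4 and q(−1) = 0) or (q(1) = 0 and q(−1) > 4). (This is the case c = 0 of the cubic problem, since x³ + a x² + b x = x·q(x) has the root 0 in [−1, 1].) -/
open Polynomial

/-- For a real quadratic `q(x) = x² + a x + b` with `a² - 4b ≥ 0`, `q` has exactly one
root (with multiplicity) in `[-1, 1]` iff `(q(1) < 0 ∧ q(-1) ≥ 0) ∨ (q(1) ≥ 0 ∧ q(-1) < 0)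
∨ (q(1) > 4 ∧ q(-1) = 0) ∨ (q(1) = 0 ∧ q(-1) > 4)`. -/
theorem quadratic_one_root_in_Icc (a b : ℝ) (hD : a^2 - 4*b ≥ 0) :
    Multiset.card (((X^2 + C a * X + C b : ℝ[X]).roots).filter
        (fun x => x ∈ Set.Icc (-1 : ℝ) 1)) = 1 ↔
      (((X^2 + C a * X + C b : ℝ[X]).eval 1 < 0 ∧
          (X^2 + C a * X + C b : ℝ[X]).eval (-1) ≥ 0) ∨
       ((X^2 + C a * X + C b : ℝ[X]).eval 1 ≥ 0 ∧
          (X^2 + C a * X + C b : ℝ[X]).eval (-1) < 0) ∨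
       ((X^2 + C a * X + C b : ℝ[X]).eval 1 > 4 ∧
          (X^2 + C a * X + C b : ℝ[X]).eval (-1) = 0) ∨
       ((X^2 + C a * X + C b : ℝ[X]).eval 1 = 0 ∧
          (X^2 + C a * X + C b : ℝ[X]).eval (-1) > 4)) := by
  obtain ⟨r, s, hrs, ha, hb⟩ : ∃ r s : ℝ, r ≤ s ∧ a = -(r + s) ∧ b = r * s := by
    have h := Real.sq_sqrt hD
    have h0 := Real.sqrt_nonneg (a^2 - 4*b)
    refine ⟨(-a - √(a^2 - 4*b))/2, (-a + √(a^2 - 4*b))/2, by linarith, by ring, by nlinarith⟩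
  have hp : (X^2 + C a * X + C b : ℝ[X]) = (X - C r) * (X - C s) := by
    rw [ha, hb]
    simp only [C_neg, C_add, C_mul]
    ring
  have hr : ((X - C r) * (X - C s) : ℝ[X]).roots = r ::ₘ s ::ₘ 0 := by
    rw [roots_mul (mul_ne_zero (X_sub_C_ne_zero r) (X_sub_C_ne_zero s)), roots_X_sub_C,
      roots_X_sub_C]
    rfl
  rw [hp, hr]
  have e1 : ((X - C r) * (X - C s) : ℝ[X]).eval 1 = (1 - r) * (1 - s) := by simp
  have e2 : ((X - C r) * (X - C s) : ℝ[X]).eval (-1) = (1 + r) * (1 + s) := by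
    simp; ring
  rw [e1, e2]
  clear e1 e2 hp hr ha hb hD
  by_cases h1 : r ∈ Set.Icc (-1 : ℝ) 1 <;> by_cases h2 : s ∈ Set.Icc (-1 : ℝ) 1
  · simp only [Multiset.filter_cons_of_pos _ h1, Multiset.filter_cons_of_pos _ h2,
      Multiset.filter_zero, Multiset.card_cons, Multiset.card_zero]
    obtain ⟨h1, h1'⟩ := h1
    obtain ⟨h2, h2'⟩ := h2
    refine iff_of_false (by norm_num) ?_
    rintro (⟨h, h'⟩ | ⟨h, h'⟩ | ⟨h, h'⟩ | ⟨h, h'⟩)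
    · nlinarith
    · nlinarith
    · rcases mul_eq_zero.1 h' with h' | h' <;> nlinarith
    · rcases mul_eq_zero.1 h with h | h <;> nlinarith
  · simp only [Multiset.filter_cons_of_pos _ h1, Multiset.filter_cons_of_neg _ h2,
      Multiset.filter_zero, Multiset.card_cons, Multiset.card_zero]
    obtain ⟨h1, h1'⟩ := h1
    have h3 : 1 < s := by
      by_contra h
      exact h2 ⟨by linarith, by linarith⟩
    refine iff_of_true (by norm_num) ?_
    rcases h1'.lt_or_eq with h | h
    · left
      constructor <;> nlinarith
    · right; right; right
      subst h
      constructor <;> nlinarith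
  · simp only [Multiset.filter_cons_of_neg _ h1, Multiset.filter_cons_of_pos _ h2,
      Multiset.filter_zero, Multiset.card_cons, Multiset.card_zero]
    obtain ⟨h2, h2'⟩ := h2
    have h3 : r < -1 := by
      by_contra h
      exact h1 ⟨by linarith, by linarith⟩
    refine iff_of_true (by norm_num) ?_
    rcases h2.lt_or_eq with h | h
    · right; left
      constructor <;> nlinarith
    · right; right; left
      subst h
      constructor <;> nlinarith
  · simp only [Multiset.filter_cons_of_neg _ h1, Multiset.filter_cons_of_neg _ h2,
      Multiset.filter_zero, Multiset.card_zero]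
    refine iff_of_false (by norm_num) ?_
    have h1' : r < -1 ∨ 1 < r := by
      by_contra! h
      exact h1 h
    have h2' : s < -1 ∨ 1 < s := by
      by_contra! h
      exact h2 h
    rintro (⟨h, h'⟩ | ⟨h, h'⟩ | ⟨h, h'⟩ | ⟨h, h'⟩)
    · rcases h1' with h1 | h1 <;> rcases h2' with h2 | h2 <;> nlinarith
    · rcases h1' with h1 | h1 <;> rcases h2' with h2 | h2 <;> nlinarith
    · rcases mul_eq_zero.1 h' with h' | h' <;> rcases h1' with h1 | h1 <;>
        rcases h2' with h2 | h2 <;> linarith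
    · rcases mul_eq_zero.1 h with h | h <;> rcases h1' with h1 | h1 <;>
        rcases h2' with h2 | h2 <;> linarith
end

section
/- (Lagrange top) Let a, b, α, β be real numbers with β > 0 and b ≠ ±a, and let f(u) = (1 − u²)(α − βu) − (b − au)², a cubic with leading coefficient β. Assume f has three real roots counted with multiplicity, and that |b² − α| ≤ β. Then f has exactly 2 roots, counted with multiplicity, in the closed interval [−1, 1]. -/
open Polynomial

lemma lt_aux1 (r s t : ℝ) (hr : 1 < r) (h1 : (1 - r) * (1 - s) * (1 - t) < 0)
    (h2 : 0 < (1 + r) * (1 + s) * (1 + t)) (h3 : r * s * t ≤ 1) :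
    s ∈ Set.Icc (-1 : ℝ) 1 := by
  have h1' : 0 < (1 - s) * (1 - t) := by
    by_contra h
    push Not at h
    nlinarith [mul_nonneg (sub_nonneg.2 hr.le) (neg_nonneg.2 h)]
  have h2' : 0 < (1 + s) * (1 + t) := by
    by_contra h
    push Not at h
    nlinarith [mul_nonneg (by linarith : 0 ≤ 1 + r) (neg_nonneg.2 h)]
  have h4 : s * t ≤ 1 := by
    by_contra h
    push Not at h
    nlinarith [mul_pos (sub_pos.2 hr) (sub_pos.2 h)]
  constructor
  · by_contra h
    push Not at h
    have ht : 1 + t < 0 := by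
      by_contra h'
      push Not at h'
      nlinarith [mul_nonneg (by linarith : 0 ≤ -1 - s) h']
    nlinarith [mul_pos (by linarith : 0 < -1 - s) (by linarith : 0 < -1 - t)]
  · by_contra h
    push Not at h
    have ht : 1 - t < 0 := by
      by_contra h'
      push Not at h'
      nlinarith [mul_nonneg (by linarith : 0 ≤ s - 1) h']
    nlinarith [mul_pos (by linarith : 0 < s - 1) (by linarith : 0 < t - 1)]

lemma lt_aux2 (r s t : ℝ) (hr : 1 < r) (h1 : (1 - r) * (1 - s) * (1 - t) < 0)
    (h2 : 0 < (1 + r) * (1 + s) * (1 + t)) (h3 : r * s * t ≤ 1) :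
    Multiset.card (Multiset.filter (fun x => x ∈ Set.Icc (-1 : ℝ) 1) {r, s, t}) = 2 := by
  have hs := lt_aux1 r s t hr h1 h2 h3
  have ht := lt_aux1 r t s hr (by linarith) (by linarith) (by linarith)
  have hr' : ¬ r ∈ Set.Icc (-1 : ℝ) 1 := fun h => absurd h.2 (not_le.2 hr)
  simp only [Multiset.insert_eq_cons]
  rw [Multiset.filter_cons_of_neg _ hr', Multiset.filter_cons_of_pos _ hs,
    Multiset.filter_singleton, if_pos ht]
  simp

/-- (Lagrange top) For `β > 0` and `b ≠ ±a`, if the cubic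
`f(u) = (1 - u²)(α - βu) - (b - au)²` has three real roots (with multiplicity) and
`|b² - α| ≤ β`, then `f` has exactly 2 roots (with multiplicity) in `[-1, 1]`. -/
theorem lagrange_top_two_roots (a b α β : ℝ) (hβ : 0 < β)
    (hb : b ≠ a ∧ b ≠ -a)
    (hroots : Multiset.card ((1 - X^2) * (C α - C β * X) - (C b - C a * X)^2 : ℝ[X]).roots = 3)
    (hc : |b^2 - α| ≤ β) :
    Multiset.card ((((1 - X^2) * (C α - C β * X) - (C b - C a * X)^2 : ℝ[X]).roots).filter
        (fun x => x ∈ Set.Icc (-1 : ℝ) 1)) = 2 := by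
  set p : ℝ[X] := (1 - X^2) * (C α - C β * X) - (C b - C a * X)^2 with hp
  have hcub : p = C β * X ^ 3 + C (-(α + a^2)) * X ^ 2 + C (2 * a * b - β) * X + C (α - b^2) := by
    rw [hp]
    simp only [map_sub, map_add, map_neg, map_mul, map_pow, map_ofNat]
    ring
  have hdeg : p.natDegree = 3 := by rw [hcub]; exact natDegree_cubic hβ.ne'
  have hlead : p.leadingCoeff = β := by rw [hcub]; exact leadingCoeff_cubic hβ.ne'
  have hprod := C_leadingCoeff_mul_prod_multiset_X_sub_C (hroots.trans hdeg.symm)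
  obtain ⟨r, s, t, hrst⟩ := Multiset.card_eq_three.1 hroots
  rw [hrst, hlead] at hprod
  have hev : ∀ u : ℝ, β * ((u - r) * (u - s) * (u - t)) =
      (1 - u^2) * (α - β * u) - (b - a * u)^2 := by
    intro u
    have := congrArg (eval u) hprod
    simp [hp] at this
    linarith
  have e1 := hev 1
  have e2 := hev (-1)
  have e3 := hev 0
  rw [hrst]
  have q1 : 0 < (b - a)^2 := by have := sub_ne_zero.2 hb.1; positivity
  have q2 : 0 < (b + a)^2 := by
    have : b + a ≠ 0 := fun h => hb.2 (by linarith)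
    positivity
  have h1 : (1 - r) * (1 - s) * (1 - t) < 0 := by
    by_contra h
    push Not at h
    nlinarith [mul_nonneg hβ.le h]
  have h2 : 0 < (1 + r) * (1 + s) * (1 + t) := by
    by_contra h
    push Not at h
    nlinarith [mul_nonneg hβ.le (neg_nonneg.2 h)]
  have h3 : r * s * t ≤ 1 := by
    have := (abs_le.1 hc).2
    by_contra h
    push Not at h
    nlinarith [mul_pos hβ (sub_pos.2 h)]
  by_cases hr : 1 < r
  · exact lt_aux2 r s t hr h1 h2 h3
  by_cases hs : 1 < s
  · have : ({r, s, t} : Multiset ℝ) = {s, r, t} := by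
      simp only [Multiset.insert_eq_cons]; exact Multiset.cons_swap _ _ _
    rw [this]
    exact lt_aux2 s r t hs (by linarith) (by linarith) (by linarith)
  by_cases ht : 1 < t
  · have : ({r, s, t} : Multiset ℝ) = {t, r, s} := by
      simp only [Multiset.insert_eq_cons, ← Multiset.singleton_add]; abel
    rw [this]
    exact lt_aux2 t r s ht (by linarith) (by linarith) (by linarith)
  push Not at hr hs ht
  have := mul_nonneg (mul_nonneg (sub_nonneg.2 hr) (sub_nonneg.2 hs)) (sub_nonneg.2 ht)
  linarith
end
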